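/- arXiv:1302.0225 — 2 statements merged into one kernel-verified Lean document; each statement's English description precedes it below -/
import Mathlib

section
/- Let (a_n) be a completely monotone sequence of reals (all iterated forward differences (−1)ᵏ applied repeatedly are nonnegative: Δ⁽ᵏ⁾_n ≥ 0 for all k,n, where Δ⁽ᵏ⁺¹⁾_n = Δ⁽ᵏ⁾_n − Δ⁽ᵏ⁾_{n+1}, Δ⁽⁰⁾_n = a_n) with a_0 = 1. Then there exists a Borel probability measure ν on [0,1] such that a_n = ∫_{[0,1]} xⁿ dν(x) for all n (Hausdorff representation). -/
open MeasureTheory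

/-- Iterated finite differences of a sequence: `Δ⁽⁰⁾ₙ = aₙ`,
`Δ⁽ᵏ⁺¹⁾ₙ = Δ⁽ᵏ⁾ₙ − Δ⁽ᵏ⁾ₙ₊₁`. -/
def iterDiff (a : ℕ → ℝ) : ℕ → ℕ → ℝ
  | 0, n => a n
  | (k+1), n => iterDiff a k n - iterDiff a k (n+1)

namespace HausdorffAux

open Polynomial Filter Topology

noncomputable def L (a : ℕ → ℝ) : ℝ[X] →ₗ[ℝ] ℝ :=
  Polynomial.lsum (fun n => a n • LinearMap.id)

lemma L_pow (a : ℕ → ℝ) (n : ℕ) : L a (X ^ n) = a n := by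
  simp [L, Polynomial.lsum_apply, X_pow_eq_monomial, sum_monomial_index]

lemma L_diff (a : ℕ → ℝ) (k : ℕ) : ∀ n, L a (X ^ n * (1 - X) ^ k) = iterDiff a k n := by
  induction k with
  | zero => intro n; simp [iterDiff, L_pow]
  | succ k ih =>
    intro n
    rw [iterDiff, ← ih, ← ih, ← map_sub]
    congr 1
    ring

lemma sum_diff (a : ℕ → ℝ) (m n : ℕ) :
    ∑ j ∈ Finset.range (m + 1), (m.choose j : ℝ) * iterDiff a (m - j) (n + j) = a n := by
  have h : (X : ℝ[X]) ^ n = ∑ j ∈ Finset.range (m + 1),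
      (m.choose j : ℝ) • (X ^ (n + j) * (1 - X) ^ (m - j)) := by
    have h1 : (X : ℝ[X]) ^ n = X ^ n * (X + (1 - X)) ^ m := by simp
    rw [h1, add_pow, Finset.mul_sum]
    refine Finset.sum_congr rfl fun j _ => ?_
    rw [smul_eq_C_mul]
    simp only [map_natCast]
    ring
  rw [← L_pow a n, h, map_sum]
  refine Finset.sum_congr rfl fun j _ => ?_
  rw [map_smul, L_diff, smul_eq_mul]

noncomputable def w (a : ℕ → ℝ) (N k : ℕ) : ℝ := (N.choose k : ℝ) * iterDiff a (N - k) k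

lemma sum_w (a : ℕ → ℝ) (N n : ℕ) (h : n ≤ N) :
    ∑ k ∈ Finset.range (N + 1), w a N k * ((k.choose n : ℝ) / N.choose n) = a n := by
  obtain ⟨m, rfl⟩ := Nat.exists_eq_add_of_le h
  rw [add_assoc, Finset.sum_range_add, Finset.sum_eq_zero, zero_add, ← sum_diff a m n]
  · refine Finset.sum_congr rfl fun j hj => ?_
    have hj : j ≤ m := by simpa [Nat.lt_succ_iff] using hj
    have hc := Nat.choose_mul (n := n + m) (k := n + j) (s := n) (by omega)
    have e1 : n + m - n = m := by omega
    have e2 : n + j - n = j := by omega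
    have e3 : n + m - (n + j) = m - j := by omega
    rw [e1, e2] at hc
    have hc' : ((n+m).choose (n+j) : ℝ) * (n+j).choose n = (n+m).choose n * m.choose j := by
      exact_mod_cast hc
    have hpos : ((n+m).choose n : ℝ) ≠ 0 := by
      exact_mod_cast (Nat.choose_pos (by omega)).ne'
    rw [w, e3]
    field_simp
    linear_combination (iterDiff a (m - j) (n + j)) * hc'
  · intro k hk
    rw [Nat.choose_eq_zero_of_lt (by simpa using hk)]
    simp

lemma approx (n : ℕ) : ∀ N k : ℕ, n < N → k ≤ N →
    |(k.choose n : ℝ) / N.choose n - ((k : ℝ) / N) ^ n| ≤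
      ∑ i ∈ Finset.range n, (i : ℝ) / ((N : ℝ) - i) := by
  induction n with
  | zero => intro N k _ _; simp
  | succ n ih =>
    intro N k hn hk
    have ih := ih N k (by omega) hk
    rw [Finset.sum_range_succ]
    have hN : (0:ℝ) < N := by exact_mod_cast (by omega : 0 < N)
    have hNn : (0:ℝ) < (N:ℝ) - n := by
      have : (n:ℝ) < N := by exact_mod_cast (by omega : n < N)
      linarith
    have hk' : (k:ℝ) ≤ N := by exact_mod_cast hk
    have hk0 : (0:ℝ) ≤ k := by positivity
    have key : ∀ K : ℕ, (K.choose (n+1) : ℝ) * (n+1) = K.choose n * ((K:ℝ) - n) := by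
      intro K
      rcases le_or_gt n K with h | h
      · have := Nat.choose_succ_right_eq K n
        rw [← Nat.cast_sub h]
        exact_mod_cast this
      · rw [Nat.choose_eq_zero_of_lt h, Nat.choose_eq_zero_of_lt (by omega)]; simp
    have hcN : (0:ℝ) < N.choose n := by exact_mod_cast Nat.choose_pos (by omega)
    have hcN1 : (0:ℝ) < N.choose (n+1) := by exact_mod_cast Nat.choose_pos (by omega)
    have hu : (k.choose (n+1) : ℝ) / N.choose (n+1) =
        (k.choose n : ℝ) / N.choose n * (((k:ℝ) - n) / (N - n)) := by
      rw [div_mul_div_comm, ← key, ← key]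
      have : (n:ℝ) + 1 ≠ 0 := by positivity
      field_simp
    rw [hu, pow_succ]
    set u := (k.choose n : ℝ) / N.choose n with hudef
    set v := ((k:ℝ)/N)^n
    have hu0 : 0 ≤ u := by positivity
    have hu1 : u ≤ 1 := by
      rw [hudef, div_le_one hcN]
      exact_mod_cast Nat.choose_le_choose n hk
    have ht0 : 0 ≤ (k:ℝ)/N := by positivity
    have ht1 : (k:ℝ)/N ≤ 1 := by rwa [div_le_one hN]
    have hd : (k:ℝ)/N - ((k:ℝ) - n) / (N - n) = (n / (N - n)) * (1 - k/N) := by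
      field_simp
      ring
    have hb : 0 ≤ (n:ℝ) / (N - n) := by positivity
    have e : u * (((k:ℝ) - n) / (N - n)) - v * ((k:ℝ)/N) =
        (u - v) * ((k:ℝ)/N) - u * ((n / (N - n)) * (1 - k/N)) := by
      rw [← hd]; ring
    rw [e]
    refine (abs_sub _ _).trans (add_le_add ?_ ?_)
    · rw [abs_mul, abs_of_nonneg ht0]
      exact (mul_le_of_le_one_right (abs_nonneg _) ht1).trans ih
    · have h1 : 0 ≤ 1 - (k:ℝ)/N := by linarith
      rw [abs_of_nonneg (by positivity)]
      calc u * ((n / (N - n)) * (1 - k/N)) ≤ 1 * ((n / (N - n)) * 1) := by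
            gcongr
            linarith
        _ = _ := by ring

lemma bound_tendsto (n : ℕ) :
    Tendsto (fun N : ℕ => ∑ i ∈ Finset.range n, (i : ℝ) / ((N : ℝ) - i)) atTop (𝓝 0) := by
  rw [← Finset.sum_const_zero (s := Finset.range n)]
  refine tendsto_finsetSum _ fun i _ => ?_
  exact (tendsto_atTop_add_const_right _ (-(i:ℝ)) tendsto_natCast_atTop_atTop).const_div_atTop _

noncomputable def z (N k : ℕ) : unitInterval := Set.projIcc 0 1 zero_le_one ((k : ℝ) / N)

lemma z_val (N k : ℕ) (h : k ≤ N) : (z N k : ℝ) = k / N := by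
  have : ((k:ℝ)/N) ∈ Set.Icc (0:ℝ) 1 :=
    ⟨by positivity, div_le_one_of_le₀ (by exact_mod_cast h) (by positivity)⟩
  rw [z, Set.projIcc_of_mem _ this]

noncomputable def mu (a : ℕ → ℝ) (N : ℕ) : Measure unitInterval :=
  ∑ k ∈ Finset.range (N + 1), ENNReal.ofReal (w a N k) • Measure.dirac (z N k)

lemma w_nonneg (a : ℕ → ℝ) (hmono : ∀ k n : ℕ, 0 ≤ iterDiff a k n) (N k : ℕ) : 0 ≤ w a N k :=
  mul_nonneg (by positivity) (hmono _ _)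

lemma sum_w_one (a : ℕ → ℝ) (h0 : a 0 = 1) (N : ℕ) :
    ∑ k ∈ Finset.range (N + 1), w a N k = 1 := by
  simpa [h0] using sum_w a N 0 (by omega)

lemma mu_prob (a : ℕ → ℝ) (hmono : ∀ k n : ℕ, 0 ≤ iterDiff a k n) (h0 : a 0 = 1) (N : ℕ) :
    IsProbabilityMeasure (mu a N) := by
  constructor
  simp only [mu, Measure.coe_finsetSum, Finset.sum_apply, Measure.smul_apply, measure_univ,
    smul_eq_mul, mul_one]
  rw [← ENNReal.ofReal_sum_of_nonneg (fun k _ => w_nonneg a hmono N k), sum_w_one a h0]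
  simp

lemma mu_int (a : ℕ → ℝ) (hmono : ∀ k n : ℕ, 0 ≤ iterDiff a k n) (N : ℕ)
    (f : unitInterval → ℝ) :
    ∫ x, f x ∂(mu a N) = ∑ k ∈ Finset.range (N + 1), w a N k * f (z N k) := by
  rw [mu, integral_finsetSum_measure]
  · refine Finset.sum_congr rfl fun k _ => ?_
    rw [integral_smul_measure, integral_dirac, ENNReal.toReal_ofReal (w_nonneg a hmono N k),
      smul_eq_mul]
  · intro k _
    exact (integrable_dirac (by simp)).smul_measure ENNReal.ofReal_ne_top

lemma mu_moment (a : ℕ → ℝ) (hmono : ∀ k n : ℕ, 0 ≤ iterDiff a k n) (h0 : a 0 = 1) (n : ℕ) :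
    Tendsto (fun N => ∫ x, (x : ℝ) ^ n ∂(mu a N)) atTop (𝓝 (a n)) := by
  rw [tendsto_iff_norm_sub_tendsto_zero]
  refine squeeze_zero' (Eventually.of_forall fun _ => norm_nonneg _) ?_ (bound_tendsto n)
  filter_upwards [eventually_gt_atTop n] with N hN
  rw [mu_int a hmono N (fun x => (x:ℝ)^n), ← sum_w a N n hN.le, ← Finset.sum_sub_distrib]
  refine (norm_sum_le _ _).trans ?_
  rw [← one_mul (∑ i ∈ Finset.range n, _), ← sum_w_one a h0 N, Finset.sum_mul]
  refine Finset.sum_le_sum fun k hk => ?_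
  have hk : k ≤ N := by simpa [Nat.lt_succ_iff] using hk
  rw [z_val N k hk, ← mul_sub, norm_mul, Real.norm_of_nonneg (w_nonneg a hmono N k),
    Real.norm_eq_abs, abs_sub_comm]
  exact mul_le_mul_of_nonneg_left (approx n N k hN hk) (w_nonneg a hmono N k)

end HausdorffAux

open HausdorffAux Filter Topology

/-- Hausdorff's representation theorem: a completely monotone sequence with
`a 0 = 1` is the moment sequence of a Borel probability measure on `[0,1]`. -/
theorem hausdorff_moment_representation (a : ℕ → ℝ)
    (hmono : ∀ k n : ℕ, 0 ≤ iterDiff a k n) (h0 : a 0 = 1) :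
    ∃ ν : Measure ℝ, IsProbabilityMeasure ν ∧ ν (Set.Icc (0:ℝ) 1)ᶜ = 0 ∧
      ∀ n : ℕ, a n = ∫ x, x ^ n ∂ν := by
  let P : ℕ → ProbabilityMeasure unitInterval := fun N => ⟨mu a N, mu_prob a hmono h0 N⟩
  obtain ⟨ν, -, hν⟩ := isCompact_univ.ultrafilter_le_nhds
    (Ultrafilter.map P (hyperfilter ℕ)) (by simp)
  have hT : Tendsto P (hyperfilter ℕ) (𝓝 ν) := hν
  rw [ProbabilityMeasure.tendsto_iff_forall_integral_tendsto] at hT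
  have hle : (hyperfilter ℕ : Filter ℕ) ≤ atTop := Nat.hyperfilter_le_atTop
  refine ⟨(ν : Measure unitInterval).map Subtype.val,
    Measure.isProbabilityMeasure_map measurable_subtype_coe.aemeasurable, ?_, fun n => ?_⟩
  · rw [Measure.map_apply measurable_subtype_coe measurableSet_Icc.compl]
    convert measure_empty (μ := (ν : Measure unitInterval))
    ext x
    simpa using x.2
  · rw [integral_map measurable_subtype_coe.aemeasurable
      (by fun_prop : Continuous fun x : ℝ => x ^ n).aestronglyMeasurable]
    let f : BoundedContinuousFunction unitInterval ℝ :=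
      BoundedContinuousFunction.mkOfCompact ⟨fun x => (x:ℝ)^n, by fun_prop⟩
    exact tendsto_nhds_unique ((mu_moment a hmono h0 n).mono_left hle) (hT f)
end

section
/- Let (Ω,F,μ,T) be an ergodic invertible probability-measure-preserving system and c: Ω → (0,∞) measurable, defining stationary conductances c(x,x+1)(ω) = c(Tˣω) on ℤ. If c̄ := c∘T⁻¹ + c is μ-integrable, then for μ-a.e. ω the heat kernel h_n of the walk started at 0 satisfies liminf_{n→∞} √n ‖h_n‖² ≥ (1/13)·√(∫(1/c)dμ / ∫c̄ dμ), with the convention that the right side is +∞ when ∫(1/c)dμ = +∞; in particular, if ∫(1/c)dμ = +∞, then lim_{n→∞} √n ‖h_n‖² = +∞ for μ-a.e. ω. -/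
open MeasureTheory Filter
open scoped BigOperators ENNReal

/-- `cbar κ x = c(x−1,x) + c(x,x+1)`, where `κ x` denotes the conductance of
the edge `{x, x+1}` of `ℤ`. -/
noncomputable def cbar (κ : ℤ → ℝ) (x : ℤ) : ℝ := κ (x - 1) + κ x

/-- One-step transition probabilities of the nearest-neighbour conductance walk. -/
noncomputable def step (κ : ℤ → ℝ) (x y : ℤ) : ℝ :=
  if y = x + 1 then κ x / cbar κ x
  else if y = x - 1 then κ (x - 1) / cbar κ x else 0

/-- `walk κ n x y = P_x[S_n = y]`, the `n`-step transition probabilities. -/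
noncomputable def walk (κ : ℤ → ℝ) : ℕ → ℤ → ℤ → ℝ
  | 0, x, y => if y = x then 1 else 0
  | (n+1), x, y =>
      walk κ n x (y - 1) * step κ (y - 1) y + walk κ n x (y + 1) * step κ (y + 1) y

/-- The heat kernel `h_n(x) = P_0[S_n = x] / c̄(x)`. -/
noncomputable def heatK (κ : ℤ → ℝ) (n : ℕ) (x : ℤ) : ℝ := walk κ n 0 x / cbar κ x

/-- The energy `‖h_n‖² = Σ_x h_n(x)² c̄(x)`. -/
noncomputable def energy (κ : ℤ → ℝ) (n : ℕ) : ℝ :=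
  ∑' x : ℤ, (heatK κ n x) ^ 2 * cbar κ x

/-- The stationary environment of conductances seen from `ω`:
`c(x,x+1)(ω) = c(Tˣ ω)`. -/
noncomputable def envC {Ω : Type*} (T : Equiv.Perm Ω) (c : Ω → ℝ) (ω : Ω) : ℤ → ℝ :=
  fun x => c ((T ^ x) ω)


noncomputable def maxErg {Ω : Type*} (T : Ω → Ω) (f : Ω → ℝ) : ℕ → Ω → ℝ
  | 0, _ => 0
  | (n+1), ω => max 0 (f ω + maxErg T f n (T ω))

lemma maxErg_nonneg {Ω : Type*} (T : Ω → Ω) (f : Ω → ℝ) (n : ℕ) (ω : Ω) :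
    0 ≤ maxErg T f n ω := by
  cases n with
  | zero => simp [maxErg]
  | succ n => simp [maxErg]

lemma maxErg_succ_le {Ω : Type*} (T : Ω → Ω) (f : Ω → ℝ) (n : ℕ) :
    ∀ ω, maxErg T f n ω ≤ maxErg T f (n+1) ω := by
  induction n with
  | zero => intro ω; exact maxErg_nonneg T f 1 ω
  | succ n ih =>
    intro ω
    have := ih (T ω)
    rw [maxErg, maxErg]
    exact max_le_max le_rfl (by linarith)

lemma maxErg_mono {Ω : Type*} (T : Ω → Ω) (f : Ω → ℝ) (ω : Ω) :
    Monotone (fun n => maxErg T f n ω) :=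
  monotone_nat_of_le_succ fun n => maxErg_succ_le T f n ω

lemma sum_le_maxErg {Ω : Type*} (T : Ω → Ω) (f : Ω → ℝ) (n : ℕ) :
    ∀ ω, birkhoffSum T f n ω ≤ maxErg T f n ω := by
  induction n with
  | zero => intro ω; simp [maxErg]
  | succ n ih =>
    intro ω
    rw [birkhoffSum_succ', maxErg]
    exact le_max_of_le_right (by linarith [ih (T ω)])

lemma maxErg_measurable {Ω : Type*} [MeasurableSpace Ω] (T : Ω → Ω) (hT : Measurable T)
    (f : Ω → ℝ) (hf : Measurable f) (n : ℕ) : Measurable (maxErg T f n) := by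
  induction n with
  | zero => exact measurable_const
  | succ n ih =>
    exact measurable_const.max (hf.add (ih.comp hT))

lemma maxErg_integrable {Ω : Type*} [MeasurableSpace Ω] (μ : Measure Ω) [IsProbabilityMeasure μ]
    (T : Ω → Ω) (hT : MeasurePreserving T μ μ)
    (f : Ω → ℝ) (hf : Integrable f μ) (n : ℕ) : Integrable (maxErg T f n) μ := by
  induction n with
  | zero => exact integrable_const (0:ℝ)
  | succ n ih =>
    exact (integrable_const (0:ℝ)).sup (hf.add (hT.integrable_comp_of_integrable ih))

lemma birkhoff_bdd {Ω : Type*} [MeasurableSpace Ω] (μ : Measure Ω) [IsProbabilityMeasure μ]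
    (T : Ω → Ω) (hT : Ergodic T μ) (f : Ω → ℝ) (hf : Measurable f) (hfi : Integrable f μ)
    (hneg : ∫ ω, f ω ∂μ < 0) :
    ∀ᵐ ω ∂μ, ∃ C : ℝ, ∀ n, birkhoffSum T f n ω ≤ C := by
  set A : Set Ω := {ω | ∀ k : ℕ, ∃ n, (k:ℝ) < maxErg T f n ω} with hA
  have hAm : MeasurableSet A := by
    have : A = ⋂ k : ℕ, ⋃ n, {ω | (k:ℝ) < maxErg T f n ω} := by
      ext ω; simp [hA]
    rw [this]
    exact MeasurableSet.iInter fun k => MeasurableSet.iUnion fun n =>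
      measurableSet_lt measurable_const (maxErg_measurable T hT.measurable f hf n)
  have hAi : T ⁻¹' A = A := by
    ext ω
    simp only [hA, Set.mem_preimage, Set.mem_ofPred_eq]
    constructor
    · intro h k
      obtain ⟨m, hm⟩ := exists_nat_gt ((k:ℝ) - f ω)
      obtain ⟨n, hn⟩ := h m
      refine ⟨n+1, ?_⟩
      rw [maxErg]
      exact lt_max_of_lt_right (by linarith)
    · intro h k
      obtain ⟨m, hm⟩ := exists_nat_gt (max 0 ((k:ℝ) + f ω))
      have hm1 := (le_max_left _ _).trans_lt hm
      have hm2 := (le_max_right _ _).trans_lt hm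
      obtain ⟨n, hn⟩ := h m
      cases n with
      | zero => simp only [maxErg] at hn; linarith
      | succ n =>
        refine ⟨n, ?_⟩
        rw [maxErg] at hn
        rcases lt_max_iff.1 hn with h1 | h1 <;> linarith
  rcases hT.toPreErgodic.ae_mem_or_ae_notMem hAm hAi with h | h
  · exfalso
    set D : ℕ → Ω → ℝ := fun n ω => maxErg T f (n+1) ω - maxErg T f n (T ω) with hD
    have hi := maxErg_integrable μ T hT.toMeasurePreserving f hfi
    have hlim : Tendsto (fun n => ∫ ω, D n ω ∂μ) atTop (nhds (∫ ω, f ω ∂μ)) := by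
      refine tendsto_integral_of_dominated_convergence (fun ω => |f ω|) ?_ hfi.abs ?_ ?_
      · intro n
        exact ((hi (n+1)).sub (hT.toMeasurePreserving.integrable_comp_of_integrable (hi n))).1
      · intro n
        refine Eventually.of_forall fun ω => ?_
        simp only [hD, maxErg, Real.norm_eq_abs]
        have h0 := maxErg_nonneg T f n (T ω)
        rcases max_cases 0 (f ω + maxErg T f n (T ω)) with ⟨h1, h2⟩ | ⟨h1, h2⟩
        · rw [h1, abs_le]
          have := neg_le_abs (f ω)
          have := abs_nonneg (f ω)
          constructor <;> linarith
        · rw [h1]; simp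
      · filter_upwards [h] with ω hω
        have hTω : T ω ∈ A := by
          have : ω ∈ T ⁻¹' A := by rw [hAi]; exact hω
          exact this
        obtain ⟨m, hm⟩ := exists_nat_gt (- f ω)
        obtain ⟨n, hn⟩ := hTω m
        refine tendsto_const_nhds.congr' ?_
        filter_upwards [eventually_ge_atTop n] with k hk
        have := maxErg_mono T f (T ω) hk
        simp only at this
        simp only [hD, maxErg]
        rw [max_eq_right (by linarith)]; ring
    have : 0 ≤ ∫ ω, f ω ∂μ := by
      refine ge_of_tendsto' hlim fun n => ?_
      have e : ∫ ω, D n ω ∂μ = ∫ ω, maxErg T f (n+1) ω ∂μ - ∫ ω, maxErg T f n ω ∂μ := by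
        simp only [hD]
        have hcomp : Integrable (fun ω => maxErg T f n (T ω)) μ :=
          hT.toMeasurePreserving.integrable_comp_of_integrable (hi n)
        rw [integral_sub (hi (n+1)) hcomp]
        congr 1
        have := hT.toMeasurePreserving.map_eq
        conv_rhs => rw [← this]
        rw [integral_map hT.measurable.aemeasurable]
        rw [this]; exact (hi n).1
      rw [e, sub_nonneg]
      exact integral_mono (hi n) (hi (n+1)) fun ω => maxErg_succ_le T f n ω
    linarith
  · filter_upwards [h] with ω hω
    simp only [hA, Set.mem_ofPred_eq, not_forall, not_exists, not_lt] at hω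
    obtain ⟨k, hk⟩ := hω
    exact ⟨k, fun n => (sum_le_maxErg T f n ω).trans (hk n)⟩

lemma birkhoff_upper {Ω : Type*} [MeasurableSpace Ω] (μ : Measure Ω) [IsProbabilityMeasure μ]
    (T : Ω → Ω) (hT : Ergodic T μ) (f : Ω → ℝ) (hf : Measurable f) (hfi : Integrable f μ) :
    ∀ᵐ ω ∂μ, ∀ ε : ℝ, 0 < ε →
      ∀ᶠ n : ℕ in atTop, birkhoffSum T f n ω / n < ∫ ω, f ω ∂μ + ε := by
  have : ∀ k : ℕ, ∀ᵐ ω ∂μ, ∃ C : ℝ, ∀ n,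
      birkhoffSum T (fun ω => f ω - (∫ ω, f ω ∂μ + 1/((k:ℝ)+1))) n ω ≤ C := by
    intro k
    refine birkhoff_bdd μ T hT _ (hf.sub_const _) (hfi.sub (integrable_const _)) ?_
    rw [integral_sub hfi (integrable_const _)]
    simp only [integral_const, probReal_univ, smul_eq_mul, one_mul]
    have : 0 < 1/((k:ℝ)+1) := by positivity
    linarith
  filter_upwards [ae_all_iff.2 this] with ω hω ε hε
  obtain ⟨k, hk⟩ := exists_nat_one_div_lt (half_pos hε)
  obtain ⟨C, hC⟩ := hω k
  obtain ⟨m, hm⟩ := exists_nat_gt (C / (ε/2))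
  filter_upwards [eventually_gt_atTop (max m 0)] with n hn
  have hn0 : 0 < n := (le_max_right _ _).trans_lt hn
  have hnm : (m:ℝ) < n := by exact_mod_cast (le_max_left _ _).trans_lt hn
  have hn' : (0:ℝ) < n := by exact_mod_cast hn0
  rw [div_lt_iff₀ hn']
  have h1 := hC n
  have h2 : birkhoffSum T (fun ω => f ω - (∫ ω, f ω ∂μ + 1/((k:ℝ)+1))) n ω
      = birkhoffSum T f n ω - n * (∫ ω, f ω ∂μ + 1/((k:ℝ)+1)) := by
    simp [birkhoffSum, Finset.sum_sub_distrib]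
    ring
  rw [h2] at h1
  have h3 : C < n * (ε/2) := by
    have := hm.trans hnm
    rwa [div_lt_iff₀ (half_pos hε)] at this
  nlinarith

lemma birkhoff_ergodic {Ω : Type*} [MeasurableSpace Ω] (μ : Measure Ω) [IsProbabilityMeasure μ]
    (T : Ω → Ω) (hT : Ergodic T μ) (f : Ω → ℝ) (hf : Measurable f) (hfi : Integrable f μ) :
    ∀ᵐ ω ∂μ, Tendsto (fun n : ℕ => (∑ j ∈ Finset.range n, f (T^[j] ω)) / n) atTop
      (nhds (∫ ω, f ω ∂μ)) := by
  filter_upwards [birkhoff_upper μ T hT f hf hfi,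
    birkhoff_upper μ T hT (fun ω => - f ω) hf.neg hfi.neg] with ω h1 h2
  rw [Metric.tendsto_nhds]
  intro ε hε
  filter_upwards [h1 ε hε, h2 ε hε] with n a b
  simp only [birkhoffSum, Finset.sum_neg_distrib, integral_neg, neg_div] at a b
  rw [Real.dist_eq, abs_lt]
  constructor <;> linarith

lemma sum_div_sq_tendsto (u : ℕ → ℝ) (α : ℝ)
    (hu : Tendsto (fun j : ℕ => u j / j) atTop (nhds α)) :
    Tendsto (fun m : ℕ => (∑ j ∈ Finset.range m, u j) / (m:ℝ)^2) atTop (nhds (α/2)) := by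
  have hid : ∀ m : ℕ, ∑ j ∈ Finset.range m, (j:ℝ) = (m:ℝ)^2/2 - m/2 := by
    intro m
    induction m with
    | zero => simp
    | succ m ih => rw [Finset.sum_range_succ, ih]; push_cast; ring
  have hinv : Tendsto (fun m : ℕ => ((m:ℝ))⁻¹) atTop (nhds 0) := tendsto_inv_atTop_nhds_zero_nat
  rw [Metric.tendsto_atTop] at hu
  rw [Metric.tendsto_nhds]
  intro ε hε
  obtain ⟨J, hJ⟩ := hu ε hε
  have key : ∀ j : ℕ, j ≥ J + 1 → |u j - α * j| ≤ ε * j := by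
    intro j hj
    have h0 : (0:ℝ) < j := by exact_mod_cast (show 0 < j by omega)
    have := (hJ j (by omega)).le
    rw [Real.dist_eq] at this
    have e : u j - α * j = (u j / j - α) * j := by field_simp
    rw [e, abs_mul, abs_of_pos h0]
    gcongr
  set C : ℝ := ∑ j ∈ Finset.range (J+1), |u j - α * j|
  have hC : 0 ≤ C := Finset.sum_nonneg fun _ _ => abs_nonneg _
  have bd : ∀ m : ℕ, |∑ j ∈ Finset.range m, (u j - α * j)| ≤ C + ε * ((m:ℝ)^2/2) := by
    intro m
    refine (Finset.abs_sum_le_sum_abs _ _).trans ?_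
    have : ∀ j : ℕ, |u j - α * j| ≤
        (if j ∈ Finset.range (J+1) then |u j - α * j| else 0) + ε * j := by
      intro j
      split_ifs with h
      · have : 0 ≤ ε * (j:ℝ) := by positivity
        linarith
      · rw [zero_add]; exact key j (by simpa using h)
    refine (Finset.sum_le_sum fun j _ => this j).trans ?_
    rw [Finset.sum_add_distrib, ← Finset.mul_sum, hid]
    have h1 : ∑ j ∈ Finset.range m, (if j ∈ Finset.range (J+1) then |u j - α * j| else 0) ≤ C := by
      rw [← Finset.sum_filter]
      apply Finset.sum_le_sum_of_subset_of_nonneg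
      · intro x hx; exact (Finset.mem_filter.1 hx).2
      · intros; exact abs_nonneg _
    have h2 : 0 ≤ ε * ((m:ℝ)/2) := by positivity
    nlinarith
  obtain ⟨m0, hm0⟩ := exists_nat_gt ((C + |α|) / (ε/2))
  filter_upwards [eventually_gt_atTop (max m0 1)] with m hm
  have hm1 : (1:ℝ) < m := by exact_mod_cast (le_max_right _ _).trans_lt hm
  have hm2 : (m0:ℝ) < m := by exact_mod_cast (le_max_left _ _).trans_lt hm
  have hmp : (0:ℝ) < m := by linarith
  have b := bd m
  rw [Finset.sum_sub_distrib, ← Finset.mul_sum, hid] at b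
  rw [Real.dist_eq]
  have e : (∑ j ∈ Finset.range m, u j) / (m:ℝ)^2 - α/2 =
    ((∑ j ∈ Finset.range m, u j - α * ((m:ℝ)^2/2 - m/2)) - α * (m/2)) / (m:ℝ)^2 := by
    field_simp; ring
  rw [e, abs_div, abs_of_pos (show (0:ℝ) < (m:ℝ)^2 by positivity), div_lt_iff₀ (by positivity)]
  refine (abs_sub _ _).trans_lt ?_
  rw [abs_mul, abs_of_pos (show (0:ℝ) < m/2 by positivity)]
  have h3 : C + |α| < m * (ε/2) := by
    have := hm0.trans hm2
    rwa [div_lt_iff₀ (half_pos hε)] at this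
  have := abs_nonneg α
  nlinarith

lemma H_tendsto (κ g : ℕ → ℝ) (α ρ K : ℝ) (hg0 : ∀ j, 0 ≤ g j) (hgK : ∀ j, g j ≤ K)
    (hA : Tendsto (fun n : ℕ => (∑ j ∈ Finset.range n, κ j) / n) atTop (nhds α))
    (hG : Tendsto (fun n : ℕ => (∑ j ∈ Finset.range n, g j) / n) atTop (nhds ρ)) :
    Tendsto (fun m : ℕ => (2 * ∑ j ∈ Finset.range m, (∑ i ∈ Finset.range j, κ i) * g j)
      / (m:ℝ)^2) atTop (nhds (α * ρ)) := by
  -- error term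
  have h1 : Tendsto (fun m : ℕ => (∑ j ∈ Finset.range m,
      ((∑ i ∈ Finset.range j, κ i) - α * j) * g j) / (m:ℝ)^2) atTop (nhds (0/2)) := by
    apply sum_div_sq_tendsto
    have : Tendsto (fun n : ℕ => K * |(∑ j ∈ Finset.range n, κ j) / n - α|) atTop (nhds 0) := by
      have := ((hA.sub_const α).abs).const_mul K
      simpa using this
    refine squeeze_zero_norm' ?_ this
    filter_upwards [eventually_gt_atTop 0] with j hj
    have h0 : (0:ℝ) < j := by exact_mod_cast hj
    have e : ((∑ i ∈ Finset.range j, κ i) - α * j) * g j / j =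
      g j * ((∑ i ∈ Finset.range j, κ i) / j - α) := by field_simp
    rw [e, Real.norm_eq_abs, abs_mul, abs_of_nonneg (hg0 j)]
    exact mul_le_mul_of_nonneg_right (hgK j) (abs_nonneg _)
  have h2 : Tendsto (fun m : ℕ => (∑ j ∈ Finset.range m, ∑ i ∈ Finset.range j, g i) / (m:ℝ)^2)
      atTop (nhds (ρ/2)) := sum_div_sq_tendsto _ _ hG
  have h3 : Tendsto (fun m : ℕ => (∑ j ∈ Finset.range m, g j) / (m:ℝ)^2)
      atTop (nhds (0/2)) := by
    apply sum_div_sq_tendsto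
    have : Tendsto (fun m : ℕ => K * ((m:ℝ))⁻¹) atTop (nhds 0) := by
      simpa using (tendsto_inv_atTop_nhds_zero_nat (𝕜 := ℝ)).const_mul K
    refine squeeze_zero (fun j => div_nonneg (hg0 j) (Nat.cast_nonneg _)) (fun j => ?_) this
    rw [div_eq_mul_inv]
    exact mul_le_mul_of_nonneg_right (hgK j) (by positivity)
  have abel : ∀ m : ℕ, ∑ j ∈ Finset.range m, (j:ℝ) * g j = m * (∑ j ∈ Finset.range m, g j)
      - ∑ j ∈ Finset.range m, ∑ i ∈ Finset.range j, g i - ∑ j ∈ Finset.range m, g j := by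
    intro m
    induction m with
    | zero => simp
    | succ m ih => simp only [Finset.sum_range_succ, ih]; push_cast; ring
  have h4 := ((h1.add (((hG.sub h2).sub h3).const_mul α)).const_mul 2)
  have e : 2 * (0/2 + α * (ρ - ρ/2 - 0/2)) = α * ρ := by ring
  rw [e] at h4
  refine h4.congr' ?_
  filter_upwards [eventually_gt_atTop 0] with m hm
  have h0 : (0:ℝ) < m := by exact_mod_cast hm
  have e2 : ∑ j ∈ Finset.range m, (∑ i ∈ Finset.range j, κ i) * g j =
     ∑ j ∈ Finset.range m, ((∑ i ∈ Finset.range j, κ i) - α * j) * g j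
      + α * ∑ j ∈ Finset.range m, (j:ℝ) * g j := by
    rw [Finset.mul_sum, ← Finset.sum_add_distrib]
    exact Finset.sum_congr rfl fun j _ => by ring
  rw [e2, abel]
  field_simp

lemma cbar_pos (κ : ℤ → ℝ) (hκ : ∀ x, 0 < κ x) (x : ℤ) : 0 < cbar κ x :=
  add_pos (hκ _) (hκ _)

lemma step_nonneg (κ : ℤ → ℝ) (hκ : ∀ x, 0 < κ x) (x y : ℤ) : 0 ≤ step κ x y := by
  unfold step
  have := cbar_pos κ hκ x
  have := hκ x
  have := hκ (x-1)
  split_ifs <;> positivity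

lemma walk_nonneg (κ : ℤ → ℝ) (hκ : ∀ x, 0 < κ x) (n : ℕ) : ∀ x y, 0 ≤ walk κ n x y := by
  induction n with
  | zero => intro x y; simp only [walk]; split_ifs <;> norm_num
  | succ n ih =>
    intro x y
    simp only [walk]
    exact add_nonneg (mul_nonneg (ih _ _) (step_nonneg κ hκ _ _))
      (mul_nonneg (ih _ _) (step_nonneg κ hκ _ _))

lemma walk_support (κ : ℤ → ℝ) (n : ℕ) : ∀ y : ℤ, (n:ℤ) < |y| → walk κ n 0 y = 0 := by
  induction n with
  | zero =>
    intro y hy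
    have : y ≠ 0 := by rintro rfl; simp at hy
    simp [walk, this]
  | succ n ih =>
    intro y hy
    push_cast at hy
    have h1 : (n:ℤ) < |y-1| := by
      rcases abs_cases y with h | h <;> rcases abs_cases (y-1) with h' | h' <;> omega
    have h2 : (n:ℤ) < |y+1| := by
      rcases abs_cases y with h | h <;> rcases abs_cases (y+1) with h' | h' <;> omega
    simp [walk, ih _ h1, ih _ h2]

lemma walk_summable (κ : ℤ → ℝ) (n : ℕ) (f : ℤ → ℝ) :
    Summable (fun x => walk κ n 0 x * f x) := by
  apply summable_of_ne_finset_zero (s := Finset.Icc (-(n:ℤ)) n)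
  intro x hx
  rw [walk_support κ n x, zero_mul]
  rw [Finset.mem_Icc] at hx
  rcases abs_cases x with h | h <;> omega

lemma step_right (κ : ℤ → ℝ) (x : ℤ) : step κ x (x+1) = κ x / cbar κ x := by simp [step]
lemma step_left (κ : ℤ → ℝ) (x : ℤ) : step κ x (x-1) = κ (x-1) / cbar κ x := by
  have : x - 1 ≠ x + 1 := by omega
  simp [step, this]

/-- One step of the semigroup. -/
lemma walk_succ_expect (κ : ℤ → ℝ) (n : ℕ) (f : ℤ → ℝ) :
    ∑' x, walk κ (n+1) 0 x * f x =
      ∑' x, walk κ n 0 x * ((κ x * f (x+1) + κ (x-1) * f (x-1)) / cbar κ x) := by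
  have hs1 := walk_summable κ n (fun x => κ x / cbar κ x * f (x+1))
  have hs2 := walk_summable κ n (fun x => κ (x-1) / cbar κ x * f (x-1))
  have e1 : ∀ x, walk κ n 0 ((Equiv.addRight (-1:ℤ)) x) * (κ ((Equiv.addRight (-1:ℤ)) x) / cbar κ ((Equiv.addRight (-1:ℤ)) x) * f ((Equiv.addRight (-1:ℤ)) x+1))
      = walk κ n 0 (x-1) * step κ (x-1) x * f x := by
    intro x
    have := step_right κ (x-1)
    rw [sub_add_cancel] at this
    rw [this, show (Equiv.addRight (-1:ℤ)) x = x - 1 from (sub_eq_add_neg x 1).symm,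
      sub_add_cancel, mul_assoc]
  have e2 : ∀ x, walk κ n 0 ((Equiv.addRight (1:ℤ)) x) * (κ ((Equiv.addRight (1:ℤ)) x - 1) / cbar κ ((Equiv.addRight (1:ℤ)) x) * f ((Equiv.addRight (1:ℤ)) x-1))
      = walk κ n 0 (x+1) * step κ (x+1) x * f x := by
    intro x
    have := step_left κ (x+1)
    rw [add_sub_cancel_right] at this
    rw [this, Equiv.coe_addRight, add_sub_cancel_right, mul_assoc]
  have t1 := (Equiv.addRight (-1:ℤ)).tsum_eq (fun x => walk κ n 0 x * (κ x / cbar κ x * f (x+1)))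
  have t2 := (Equiv.addRight (1:ℤ)).tsum_eq (fun x => walk κ n 0 x * (κ (x-1) / cbar κ x * f (x-1)))
  have s1 := (Equiv.addRight (-1:ℤ)).summable_iff.2 hs1
  have s2 := (Equiv.addRight (1:ℤ)).summable_iff.2 hs2
  simp only [Function.comp_def, e1] at s1 t1
  simp only [Function.comp_def, e2] at s2 t2
  calc _ = ∑' x, (walk κ n 0 (x-1) * step κ (x-1) x * f x
        + walk κ n 0 (x+1) * step κ (x+1) x * f x) := by
        refine tsum_congr fun x => ?_
        simp only [walk]; ring
    _ = _ := by
        rw [s1.tsum_add s2, t1, t2, ← hs1.tsum_add hs2]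
        refine tsum_congr fun x => ?_
        ring

lemma walk_total (κ : ℤ → ℝ) (hκ : ∀ x, 0 < κ x) (n : ℕ) : ∑' x, walk κ n 0 x = 1 := by
  induction n with
  | zero => simp [walk]
  | succ n ih =>
    have := walk_succ_expect κ n (fun _ => 1)
    simp only [mul_one] at this
    rw [this, ← ih]
    refine tsum_congr fun x => ?_
    have := (cbar_pos κ hκ x).ne'
    rw [show κ x + κ (x-1) = cbar κ x by unfold cbar; ring, div_self this, mul_one]

lemma walk_expect (κ : ℤ → ℝ) (hκ : ∀ x, 0 < κ x) (f : ℤ → ℝ) (hf0 : f 0 = 0)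
    (hf : ∀ x, κ x * f (x+1) + κ (x-1) * f (x-1) = cbar κ x * (f x + 1)) (n : ℕ) :
    ∑' x, walk κ n 0 x * f x = n := by
  induction n with
  | zero => simp [walk, hf0]
  | succ n ih =>
    rw [walk_succ_expect]
    have : ∀ x, walk κ n 0 x * ((κ x * f (x+1) + κ (x-1) * f (x-1)) / cbar κ x)
        = walk κ n 0 x * f x + walk κ n 0 x * 1 := by
      intro x
      rw [hf, mul_div_cancel_left₀ _ (cbar_pos κ hκ x).ne']; ring
    rw [tsum_congr this, (walk_summable κ n f).tsum_add (walk_summable κ n fun _ => 1), ih]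
    simp [walk_total κ hκ n]

/-- The half-line exit-time function. -/
noncomputable def halfF (κ : ℕ → ℝ) (m : ℕ) : ℝ :=
  ∑ j ∈ Finset.range m, (2 * (∑ i ∈ Finset.range j, κ i) / κ j + 1)

lemma halfF_succ (κ : ℕ → ℝ) (m : ℕ) : halfF κ (m+1) = halfF κ m +
    (2 * (∑ i ∈ Finset.range m, κ i) / κ m + 1) := by
  simp [halfF, Finset.sum_range_succ]

lemma halfF_term (κ : ℕ → ℝ) (hκ : ∀ j, 0 < κ j) (m : ℕ) :
    0 ≤ 2 * (∑ i ∈ Finset.range m, κ i) / κ m + 1 := by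
  have := hκ m
  have : 0 ≤ ∑ i ∈ Finset.range m, κ i := Finset.sum_nonneg fun i _ => (hκ i).le
  positivity

lemma halfF_mono (κ : ℕ → ℝ) (hκ : ∀ j, 0 < κ j) : Monotone (halfF κ) := by
  refine monotone_nat_of_le_succ fun m => ?_
  rw [halfF_succ]
  linarith [halfF_term κ hκ m]

lemma halfF_rec (κ : ℕ → ℝ) (hκ : ∀ j, 0 < κ j) (m : ℕ) :
    κ (m+1) * halfF κ (m+2) + κ m * halfF κ m = (κ m + κ (m+1)) * (halfF κ (m+1) + 1) := by
  rw [halfF_succ κ (m+1), halfF_succ κ m, Finset.sum_range_succ]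
  have := (hκ m).ne'
  have := (hκ (m+1)).ne'
  field_simp
  ring

lemma halfF_ge (κ g : ℕ → ℝ) (hκ : ∀ j, 0 < κ j) (hg : ∀ j, g j ≤ 1 / κ j) (m : ℕ) :
    2 * ∑ j ∈ Finset.range m, (∑ i ∈ Finset.range j, κ i) * g j ≤ halfF κ m := by
  rw [Finset.mul_sum]
  refine Finset.sum_le_sum fun j _ => ?_
  have h : 0 ≤ ∑ i ∈ Finset.range j, κ i := Finset.sum_nonneg fun i _ => (hκ i).le
  have := mul_le_mul_of_nonneg_left (hg j) h
  rw [mul_one_div] at this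
  rw [mul_div_assoc]
  linarith

noncomputable def fullF (κ : ℤ → ℝ) (x : ℤ) : ℝ :=
  if 0 ≤ x then halfF (fun j => κ j) x.toNat else halfF (fun j => κ (-1 - j)) (-x).toNat

lemma fullF_nat (κ : ℤ → ℝ) (m : ℕ) : fullF κ m = halfF (fun j => κ j) m := by
  simp [fullF]

lemma fullF_neg (κ : ℤ → ℝ) (m : ℕ) : fullF κ (-m) = halfF (fun j => κ (-1 - j)) m := by
  cases m with
  | zero => simp [fullF, halfF]
  | succ m =>
    have : ¬ (0:ℤ) ≤ -((m+1:ℕ):ℤ) := by push_cast; omega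
    rw [fullF, if_neg this]
    congr 1

lemma fullF_rec (κ : ℤ → ℝ) (hκ : ∀ x, 0 < κ x) (x : ℤ) :
    κ x * fullF κ (x+1) + κ (x-1) * fullF κ (x-1) = cbar κ x * (fullF κ x + 1) := by
  rcases lt_trichotomy x 0 with h | h | h
  · obtain ⟨m, rfl⟩ : ∃ m : ℕ, x = -((m+1 : ℕ):ℤ) := ⟨(-x-1).toNat, by omega⟩
    have := halfF_rec (fun j => κ (-1-j)) (fun j => hκ _) m
    rw [show -((m+1 : ℕ):ℤ) + 1 = -(m:ℤ) by push_cast; ring,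
      show -((m+1 : ℕ):ℤ) - 1 = -((m+2:ℕ):ℤ) by push_cast; ring, fullF_neg, fullF_neg, fullF_neg,
      cbar]
    rw [show (-1:ℤ) - ((m+1:ℕ):ℤ) = -((m+2:ℕ):ℤ) by push_cast; ring,
      show (-1:ℤ) - (m:ℤ) = -((m+1:ℕ):ℤ) by push_cast; ring] at this
    rw [show -((m+1 : ℕ):ℤ) - 1 = -((m+2:ℕ):ℤ) by push_cast; ring]
    linarith
  · subst h
    have h1 := fullF_nat κ 1
    have h2 := fullF_neg κ 1
    have h3 := fullF_nat κ 0
    simp [halfF] at h1 h2 h3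
    simp [h1, h2, h3, cbar]
    ring
  · obtain ⟨m, rfl⟩ : ∃ m : ℕ, x = ((m+1 : ℕ):ℤ) := ⟨(x-1).toNat, by omega⟩
    have := halfF_rec (fun j => κ j) (fun j => hκ _) m
    rw [show ((m+1 : ℕ):ℤ) + 1 = ((m+2:ℕ):ℤ) by push_cast; ring,
      show ((m+1 : ℕ):ℤ) - 1 = (m:ℤ) by push_cast; ring, fullF_nat, fullF_nat, fullF_nat,
      cbar]
    rw [show ((m+1 : ℕ):ℤ) - 1 = (m:ℤ) by push_cast; ring]
    linarith

lemma fullF_ge (κ : ℤ → ℝ) (hκ : ∀ x, 0 < κ x) (N : ℕ) (x : ℤ) (hx : (N:ℤ) ≤ |x|) :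
    min (halfF (fun j => κ j) N) (halfF (fun j => κ (-1-j)) N) ≤ fullF κ x := by
  rcases le_total 0 x with h | h
  · obtain ⟨m, rfl⟩ : ∃ m : ℕ, x = m := ⟨x.toNat, by omega⟩
    rw [fullF_nat]
    rw [abs_of_nonneg h] at hx
    exact (min_le_left _ _).trans (halfF_mono _ (fun j => hκ _) (by exact_mod_cast hx))
  · obtain ⟨m, rfl⟩ : ∃ m : ℕ, x = -(m:ℤ) := ⟨(-x).toNat, by omega⟩
    rw [fullF_neg]
    rw [abs_of_nonpos h, neg_neg] at hx
    exact (min_le_right _ _).trans (halfF_mono _ (fun j => hκ _) (by exact_mod_cast hx))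

lemma fullF_nonneg (κ : ℤ → ℝ) (hκ : ∀ x, 0 < κ x) (x : ℤ) : 0 ≤ fullF κ x := by
  have := fullF_ge κ hκ 0 x (by simp)
  simpa [halfF] using this

lemma walk_confine (κ : ℤ → ℝ) (hκ : ∀ x, 0 < κ x) (n N : ℕ) (b : ℝ) (hb : 0 < b)
    (h1 : b ≤ halfF (fun j => κ j) N) (h2 : b ≤ halfF (fun j => κ (-1-j)) N) :
    1 - n / b ≤ ∑ x ∈ Finset.Icc (-(N:ℤ)) N, walk κ n 0 x := by
  have e := walk_expect κ hκ (fullF κ) (by simp [fullF, halfF]) (fullF_rec κ hκ) n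
  have t := walk_total κ hκ n
  have s0 := walk_summable κ n (fun _ => 1)
  simp only [mul_one] at s0
  have s1 := (walk_summable κ n (fullF κ)).div_const b
  have : 1 - n / b = ∑' x, (walk κ n 0 x - walk κ n 0 x * fullF κ x / b) := by
    rw [s0.tsum_sub s1, t, tsum_div_const, e]
  have e2 : ∑ x ∈ Finset.Icc (-(N:ℤ)) N, walk κ n 0 x =
      ∑' x, walk κ n 0 x * (if x ∈ Finset.Icc (-(N:ℤ)) N then 1 else 0) := by
    rw [tsum_eq_sum (s := Finset.Icc (-(N:ℤ)) N)]
    · exact Finset.sum_congr rfl fun x hx => by rw [if_pos hx, mul_one]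
    · intro x hx; rw [if_neg hx, mul_zero]
  rw [this, e2]
  refine (s0.sub s1).tsum_le_tsum (fun x => ?_) (walk_summable κ n _)
  have hw := walk_nonneg κ hκ n 0 x
  have hF := fullF_nonneg κ hκ x
  split_ifs with h
  · have : 0 ≤ walk κ n 0 x * fullF κ x / b := by positivity
    linarith
  · rw [Finset.mem_Icc] at h
    have hx : (N:ℤ) ≤ |x| := by
      rcases abs_cases x with h | h <;> omega
    have h3 := (le_min h1 h2).trans (fullF_ge κ hκ N x hx)
    have h4 : walk κ n 0 x ≤ walk κ n 0 x * fullF κ x / b := by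
      rw [le_div_iff₀ hb]
      exact mul_le_mul_of_nonneg_left h3 hw
    linarith

lemma energy_ge (κ : ℤ → ℝ) (hκ : ∀ x, 0 < κ x) (n : ℕ) (B : Finset ℤ) :
    (∑ x ∈ B, walk κ n 0 x)^2 / (∑ x ∈ B, cbar κ x) ≤ energy κ n := by
  refine (Finset.sq_sum_div_le_sum_sq_div _ _ fun x _ => cbar_pos κ hκ x).trans ?_
  have e : ∀ x, heatK κ n x ^ 2 * cbar κ x = walk κ n 0 x ^ 2 / cbar κ x := by
    intro x
    have := (cbar_pos κ hκ x).ne'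
    rw [heatK]; field_simp
  rw [energy, tsum_congr e]
  refine Summable.sum_le_tsum B (fun x _ => div_nonneg (sq_nonneg _) (cbar_pos κ hκ x).le) ?_
  refine (walk_summable κ n (fun x => walk κ n 0 x / cbar κ x)).congr fun x => ?_
  ring

lemma sum_cbar_eq (κ : ℤ → ℝ) (N : ℕ) :
    ∑ x ∈ Finset.Icc (-(N:ℤ)) N, cbar κ x = 2 * (∑ j ∈ Finset.range (N+1), κ j
      + ∑ j ∈ Finset.range (N+1), κ (-1 - (j:ℤ))) - κ N - κ (-1 - N) := by
  induction N with
  | zero =>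
    simp [cbar]
    ring
  | succ N ih =>
    have : Finset.Icc (-((N+1:ℕ):ℤ)) ((N+1:ℕ):ℤ) =
        insert ((N+1:ℕ):ℤ) (insert (-((N+1:ℕ):ℤ)) (Finset.Icc (-(N:ℤ)) N)) := by
      ext x; simp only [Finset.mem_insert, Finset.mem_Icc]; push_cast; omega
    rw [this, Finset.sum_insert, Finset.sum_insert, Finset.sum_range_succ _ (N+1),
      Finset.sum_range_succ _ (N+1), ih]
    · simp only [cbar]
      rw [show ((N+1:ℕ):ℤ) - 1 = N by push_cast; ring,
        show -((N+1:ℕ):ℤ) - 1 = -1 - ((N+1:ℕ):ℤ) by ring,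
        show -((N+1:ℕ):ℤ) = -1 - (N:ℤ) by push_cast; ring]
      ring
    · simp
    · simp only [Finset.mem_insert, Finset.mem_Icc]; push_cast; omega

/-- Deterministic lower bound. -/
lemma energy_lower (κ : ℤ → ℝ) (hκ : ∀ x, 0 < κ x) (n N : ℕ) (b : ℝ) (hb : 0 < b) (hnb : (n:ℝ) ≤ b)
    (h1 : b ≤ halfF (fun j => κ j) N) (h2 : b ≤ halfF (fun j => κ (-1-j)) N) :
    (1 - n / b)^2 / (2 * (∑ j ∈ Finset.range (N+1), κ j
      + ∑ j ∈ Finset.range (N+1), κ (-1 - (j:ℤ)))) ≤ energy κ n := by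
  refine le_trans ?_ (energy_ge κ hκ n (Finset.Icc (-(N:ℤ)) N))
  have c := walk_confine κ hκ n N b hb h1 h2
  have p : 0 ≤ 1 - n / b := by
    rw [sub_nonneg, div_le_one hb]; exact hnb
  have q : 0 < ∑ x ∈ Finset.Icc (-(N:ℤ)) N, cbar κ x :=
    Finset.sum_pos (fun x _ => cbar_pos κ hκ x) ⟨0, by simp⟩
  have r := sum_cbar_eq κ N
  gcongr
  linarith [hκ N, hκ (-1-N)]

lemma final_const (α ρ : ℝ) (hα : 0 < α) (hρ : 0 < ρ) :
    (1/13) * Real.sqrt (ρ / (2 * α)) <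
      (1 - ((9:ℝ)/2)⁻¹)^2 / (2 * (α * (3 / Real.sqrt (2 * α * ρ)) + α * (3 / Real.sqrt (2 * α * ρ)))) := by
  have ht : 0 < Real.sqrt (2 * α * ρ) := Real.sqrt_pos.2 (by positivity)
  have ht2 : Real.sqrt (2 * α * ρ) ^ 2 = 2 * α * ρ := Real.sq_sqrt (by positivity)
  have e : Real.sqrt (ρ / (2 * α)) = Real.sqrt (2 * α * ρ) / (2 * α) := by
    rw [Real.sqrt_eq_iff_mul_self_eq (by positivity) (by positivity)]
    rw [div_mul_div_comm, ← sq, ht2]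
    field_simp
  rw [e]
  set t := Real.sqrt (2 * α * ρ)
  have e2 : (1 - ((9:ℝ)/2)⁻¹)^2 / (2 * (α * (3 / t) + α * (3 / t))) = 49/972 * (t/α) := by
    field_simp; norm_num
  have e3 : 1/13 * (t / (2*α)) = 1/26 * (t/α) := by field_simp; norm_num
  rw [e2, e3]
  have : 0 < t / α := by positivity
  linarith

lemma energy_asymp (κ : ℤ → ℝ) (hκ : ∀ x, 0 < κ x) (g g' : ℕ → ℝ) (α ρ K : ℝ)
    (hα : 0 < α) (hρ : 0 < ρ)
    (hg0 : ∀ j, 0 ≤ g j) (hgK : ∀ j, g j ≤ K) (hgκ : ∀ j : ℕ, g j ≤ 1 / κ j)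
    (hg0' : ∀ j, 0 ≤ g' j) (hgK' : ∀ j, g' j ≤ K) (hgκ' : ∀ j : ℕ, g' j ≤ 1 / κ (-1-j))
    (hA : Tendsto (fun n : ℕ => (∑ j ∈ Finset.range n, κ j) / n) atTop (nhds α))
    (hG : Tendsto (fun n : ℕ => (∑ j ∈ Finset.range n, g j) / n) atTop (nhds ρ))
    (hA' : Tendsto (fun n : ℕ => (∑ j ∈ Finset.range n, κ (-1-j)) / n) atTop (nhds α))
    (hG' : Tendsto (fun n : ℕ => (∑ j ∈ Finset.range n, g' j) / n) atTop (nhds ρ)) :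
    ∀ᶠ n : ℕ in atTop, (1/13) * Real.sqrt (ρ / (2 * α)) ≤ Real.sqrt n * energy κ n := by
  set lam : ℝ := 3 / Real.sqrt (2 * α * ρ) with hlam
  have ht : 0 < Real.sqrt (2 * α * ρ) := Real.sqrt_pos.2 (by positivity)
  have ht2 : Real.sqrt (2 * α * ρ) ^ 2 = 2 * α * ρ := Real.sq_sqrt (by positivity)
  have hlam0 : 0 < lam := by positivity
  have hlam2 : α * ρ * lam^2 = 9/2 := by
    rw [hlam, div_pow, ht2]; field_simp; norm_num
  have hsq : Tendsto (fun n : ℕ => Real.sqrt n) atTop atTop :=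
    Real.tendsto_sqrt_atTop.comp tendsto_natCast_atTop_atTop
  set N : ℕ → ℕ := fun n => ⌊lam * Real.sqrt n⌋₊ with hN
  have hNdiv : Tendsto (fun n : ℕ => (N n : ℝ) / Real.sqrt n) atTop (nhds lam) :=
    (tendsto_nat_floor_mul_div_atTop hlam0.le).comp hsq
  have hNtop : Tendsto N atTop atTop :=
    tendsto_nat_floor_atTop.comp (hsq.const_mul_atTop hlam0)
  have hN1top : Tendsto (fun n => N n + 1) atTop atTop := (tendsto_add_atTop_nat 1).comp hNtop
  have hinv : Tendsto (fun n : ℕ => (Real.sqrt n)⁻¹) atTop (nhds 0) :=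
    tendsto_inv_atTop_zero.comp hsq
  have hN1div : Tendsto (fun n : ℕ => ((N n + 1 : ℕ) : ℝ) / Real.sqrt n) atTop (nhds lam) := by
    have := hNdiv.add hinv
    rw [add_zero] at this
    refine this.congr fun n => ?_
    push_cast; rw [add_div, one_div]
  set H : ℕ → ℝ := fun m => 2 * ∑ j ∈ Finset.range m, (∑ i ∈ Finset.range j, κ i) * g j with hH
  set H' : ℕ → ℝ := fun m => 2 * ∑ j ∈ Finset.range m, (∑ i ∈ Finset.range j, κ (-1-i)) * g' j
    with hH'
  have key : ∀ U : ℕ → ℝ, Tendsto (fun m : ℕ => U m / (m:ℝ)^2) atTop (nhds (α * ρ)) →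
      Tendsto (fun n : ℕ => U (N n) / n) atTop (nhds (9/2)) := by
    intro U hU
    have h := (hU.comp hNtop).mul (hNdiv.pow 2)
    rw [hlam2] at h
    refine h.congr' ?_
    filter_upwards [eventually_gt_atTop 0, hNtop.eventually_gt_atTop 0] with n hn hNn
    have h1 : (0:ℝ) < n := by exact_mod_cast hn
    have h2 : (0:ℝ) < N n := by exact_mod_cast hNn
    simp only [Function.comp_def]
    rw [div_pow, Real.sq_sqrt h1.le]
    field_simp
  have k1 := key H (H_tendsto (fun j => κ j) g α ρ K hg0 hgK hA hG)
  have k2 := key H' (H_tendsto (fun j => κ (-1-j)) g' α ρ K hg0' hgK' hA' hG')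
  set b : ℕ → ℝ := fun n => min (H (N n)) (H' (N n)) with hb
  have kb : Tendsto (fun n : ℕ => b n / n) atTop (nhds (9/2)) := by
    have := k1.min k2
    rw [min_self] at this
    refine this.congr fun n => ?_
    rw [hb, min_div_div_right (Nat.cast_nonneg n)]
  have key2 : ∀ A : ℕ → ℝ, Tendsto (fun m : ℕ => A m / (m:ℝ)) atTop (nhds α) →
      Tendsto (fun n : ℕ => A (N n + 1) / Real.sqrt n) atTop (nhds (α * lam)) := by
    intro A hA
    have h := (hA.comp hN1top).mul hN1div
    refine h.congr fun n => ?_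
    simp only [Function.comp_def]
    have : ((N n + 1 : ℕ):ℝ) ≠ 0 := by positivity
    field_simp
  have v := ((key2 _ hA).add (key2 _ hA')).const_mul 2
  have lim := (((kb.inv₀ (by norm_num)).const_sub 1).pow 2).div v (by positivity)
  filter_upwards [lim.eventually_const_lt (final_const α ρ hα hρ), eventually_gt_atTop 0,
    kb.eventually_const_lt (show (1:ℝ) < 9/2 by norm_num)] with n h1 h2 h3
  have hn : (0:ℝ) < n := by exact_mod_cast h2
  have hs : 0 < Real.sqrt n := Real.sqrt_pos.2 hn
  have hbn : (n:ℝ) < b n := by rwa [one_lt_div hn] at h3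
  have := energy_lower κ hκ n (N n) (b n) (hn.trans hbn) hbn.le
    ((min_le_left _ _).trans (halfF_ge (fun j => κ j) g (fun j => hκ _) hgκ _))
    ((min_le_right _ _).trans (halfF_ge (fun j => κ (-1-j)) g' (fun j => hκ _) hgκ' _))
  refine h1.le.trans ((le_of_eq ?_).trans (mul_le_mul_of_nonneg_left this hs.le))
  simp only [Pi.div_apply]
  rw [inv_div, ← add_div, ← mul_div_assoc, div_div_eq_mul_div, mul_comm, mul_div_assoc]

theorem energy_liminf_lower_bound {Ω : Type*} [MeasurableSpace Ω]
    (μ : Measure Ω) [IsProbabilityMeasure μ]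
    (T : Equiv.Perm Ω) (hT : Ergodic T μ)
    (hTsymm : MeasurePreserving T.symm μ μ)
    (c : Ω → ℝ) (hc : Measurable c) (hcpos : ∀ ω, 0 < c ω)
    (hcbar : Integrable (fun ω => c (T.symm ω) + c ω) μ) :
    (∀ᵐ ω ∂μ,
      (1 / 13 : ℝ≥0∞) *
          ((∫⁻ ω, ENNReal.ofReal (1 / c ω) ∂μ) /
            (∫⁻ ω, ENNReal.ofReal (c (T.symm ω) + c ω) ∂μ)) ^ ((1 : ℝ) / 2)
        ≤ liminf (fun n : ℕ =>
            ENNReal.ofReal (Real.sqrt n * energy (envC T c ω) n)) atTop)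
    ∧ ((∫⁻ ω, ENNReal.ofReal (1 / c ω) ∂μ = ⊤) →
        ∀ᵐ ω ∂μ,
          Tendsto (fun n : ℕ => Real.sqrt n * energy (envC T c ω) n) atTop atTop) := by
  have hsm : Measurable T.symm := hTsymm.measurable
  have hS : Ergodic T.symm μ :=
    { toMeasurePreserving := hTsymm
      toPreErgodic := ⟨fun s hs h => hT.toPreErgodic.aeconst_set hs (by
        ext x
        have h' : T x ∈ T.symm ⁻¹' s ↔ T x ∈ s := by rw [h]
        simpa using h'.symm)⟩ }
  have hcsm : Measurable (fun ω => c (T.symm ω)) := hc.comp hsm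
  have hci : Integrable c μ := by
    refine hcbar.mono' hc.aestronglyMeasurable (Eventually.of_forall fun ω => ?_)
    rw [Real.norm_eq_abs, abs_of_pos (hcpos ω)]
    linarith [hcpos (T.symm ω)]
  have hintegral : ∀ u : Ω → ℝ, Measurable u → ∫ ω, u (T.symm ω) ∂μ = ∫ ω, u ω ∂μ := by
    intro u hu
    have := integral_map (μ := μ) hsm.aemeasurable (f := u) hu.aestronglyMeasurable
    rw [hTsymm.map_eq] at this
    exact this.symm
  have hcsi : Integrable (fun ω => c (T.symm ω)) μ := hTsymm.integrable_comp_of_integrable hci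
  set α : ℝ := ∫ ω, c ω ∂μ with hα
  have hα0 : 0 < α := by
    rw [hα, integral_pos_iff_support_of_nonneg (fun ω => (hcpos ω).le) hci]
    have : Function.support c = Set.univ := by
      ext ω; simp [(hcpos ω).ne']
    rw [this]; simp
  have ha : ∫⁻ ω, ENNReal.ofReal (c (T.symm ω) + c ω) ∂μ = ENNReal.ofReal (2 * α) := by
    rw [← ofReal_integral_eq_lintegral_ofReal hcbar
      (Eventually.of_forall fun ω => (add_pos (hcpos _) (hcpos _)).le),
      integral_add hcsi hci, hintegral c hc, two_mul]
  set g : ℕ → Ω → ℝ := fun K ω => min (1 / c ω) ((K:ℝ) + 1) with hg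
  have hgm : ∀ K, Measurable (g K) := fun K =>
    (measurable_const.div hc).min measurable_const
  have hg0 : ∀ K ω, 0 < g K ω := fun K ω =>
    lt_min (one_div_pos.2 (hcpos ω)) (by positivity)
  have hgi : ∀ K, Integrable (g K) μ := by
    intro K
    refine (integrable_const ((K:ℝ)+1)).mono' (hgm K).aestronglyMeasurable
      (Eventually.of_forall fun ω => ?_)
    rw [Real.norm_eq_abs, abs_of_pos (hg0 K ω)]
    exact min_le_right _ _
  have hρ0 : ∀ K, 0 < ∫ ω, g K ω ∂μ := by
    intro K
    rw [integral_pos_iff_support_of_nonneg (fun ω => (hg0 K ω).le) (hgi K)]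
    have : Function.support (g K) = Set.univ := by
      ext ω; simp [(hg0 K ω).ne']
    rw [this]; simp
  have hmct : Tendsto (fun K => ENNReal.ofReal (∫ ω, g K ω ∂μ)) atTop
      (nhds (∫⁻ ω, ENNReal.ofReal (1 / c ω) ∂μ)) := by
    have e : ∀ K, ENNReal.ofReal (∫ ω, g K ω ∂μ) = ∫⁻ ω, ENNReal.ofReal (g K ω) ∂μ := fun K =>
      ofReal_integral_eq_lintegral_ofReal (hgi K) (Eventually.of_forall fun ω => (hg0 K ω).le)
    simp only [e]
    refine lintegral_tendsto_of_tendsto_of_monotone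
      (fun K => (hgm K).ennreal_ofReal.aemeasurable) ?_ ?_
    · refine Eventually.of_forall fun ω K L hKL => ENNReal.ofReal_le_ofReal ?_
      have : (K:ℝ) ≤ L := by exact_mod_cast hKL
      exact min_le_min le_rfl (by linarith)
    · refine Eventually.of_forall fun ω => ?_
      obtain ⟨m, hm⟩ := exists_nat_gt (1 / c ω)
      refine tendsto_const_nhds.congr' ?_
      filter_upwards [eventually_ge_atTop m] with K hK
      have : (m:ℝ) ≤ K := by exact_mod_cast hK
      simp only [hg]
      rw [min_eq_left (by linarith)]
  have hpow : ∀ (ω : Ω) (j : ℕ), (T ^ (j:ℤ)) ω = T^[j] ω := by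
    intro ω j
    rw [zpow_natCast, Equiv.Perm.iterate_eq_pow]
  have hpow' : ∀ (ω : Ω) (j : ℕ), (T ^ (-1 - (j:ℤ))) ω = T.symm (T.symm^[j] ω) := by
    intro ω j
    have h1 : T.symm (T.symm^[j] ω) = T.symm^[j+1] ω := by
      rw [Function.iterate_succ_apply']
    rw [h1, Equiv.Perm.iterate_eq_pow, show (-1 - (j:ℤ)) = -((j+1:ℕ):ℤ) by push_cast; ring,
      zpow_neg, zpow_natCast, ← inv_pow]
    rfl
  have main : ∀ K : ℕ, ∀ᵐ ω ∂μ, ∀ᶠ n : ℕ in atTop,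
      (1/13) * Real.sqrt ((∫ ω, g K ω ∂μ) / (2 * α)) ≤
        Real.sqrt n * energy (envC T c ω) n := by
    intro K
    have b1 := birkhoff_ergodic μ T hT c hc hci
    have b2 := birkhoff_ergodic μ T hT (g K) (hgm K) (hgi K)
    have b3 := birkhoff_ergodic μ T.symm hS _ hcsm hcsi
    have b4 := birkhoff_ergodic μ T.symm hS (fun ω => g K (T.symm ω)) ((hgm K).comp hsm)
      (hTsymm.integrable_comp_of_integrable (hgi K))
    rw [hintegral c hc] at b3
    rw [hintegral (g K) (hgm K)] at b4
    filter_upwards [b1, b2, b3, b4] with ω h1 h2 h3 h4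
    refine energy_asymp (envC T c ω) (fun x => hcpos _) (fun j => g K (T^[j] ω))
      (fun j => g K (T.symm (T.symm^[j] ω))) α _ ((K:ℝ)+1) hα0 (hρ0 K)
      (fun j => (hg0 _ _).le) (fun j => min_le_right _ _) ?_
      (fun j => (hg0 _ _).le) (fun j => min_le_right _ _) ?_ ?_ h2 ?_ h4
    · intro j; simp only [envC, hpow]; exact min_le_left _ _
    · intro j; simp only [envC, hpow']; exact min_le_left _ _
    · simpa only [envC, hpow] using h1
    · simpa only [envC, hpow'] using h3
  have part1 : ∀ᵐ ω ∂μ,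
      (1 / 13 : ℝ≥0∞) *
          ((∫⁻ ω, ENNReal.ofReal (1 / c ω) ∂μ) /
            (∫⁻ ω, ENNReal.ofReal (c (T.symm ω) + c ω) ∂μ)) ^ ((1 : ℝ) / 2)
        ≤ liminf (fun n : ℕ =>
            ENNReal.ofReal (Real.sqrt n * energy (envC T c ω) n)) atTop := by
    filter_upwards [ae_all_iff.2 main] with ω hω
    have ha0 : ENNReal.ofReal (2 * α) ≠ 0 := by
      simp only [ne_eq, ENNReal.ofReal_eq_zero, not_le]; positivity
    rw [ha]
    have hl : Tendsto (fun K => (1 / 13 : ℝ≥0∞) *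
        (ENNReal.ofReal (∫ ω, g K ω ∂μ) / ENNReal.ofReal (2 * α)) ^ ((1 : ℝ) / 2)) atTop
        (nhds ((1 / 13 : ℝ≥0∞) *
          ((∫⁻ ω, ENNReal.ofReal (1 / c ω) ∂μ) / ENNReal.ofReal (2 * α)) ^ ((1 : ℝ) / 2))) := by
      refine ENNReal.Tendsto.const_mul ?_ (Or.inr (by simp))
      refine (ENNReal.continuous_rpow_const.tendsto _).comp ?_
      exact ENNReal.Tendsto.div_const hmct (Or.inr ha0)
    refine le_of_tendsto' hl fun K => ?_
    refine le_liminf_of_le (by isBoundedDefault) ?_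
    filter_upwards [hω K] with n hn
    refine le_trans (le_of_eq ?_) (ENNReal.ofReal_le_ofReal hn)
    have hq : 0 ≤ (∫ ω, g K ω ∂μ) / (2 * α) := div_nonneg (hρ0 K).le (by positivity)
    rw [ENNReal.ofReal_mul (p := 1/13) (by norm_num), Real.sqrt_eq_rpow,
      ← ENNReal.ofReal_rpow_of_nonneg hq (show (0:ℝ) ≤ 1/2 by norm_num),
      ENNReal.ofReal_div_of_pos (show (0:ℝ) < 2 * α by positivity),
      ENNReal.ofReal_div_of_pos (show (0:ℝ) < 13 by norm_num)]
    congr 1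
    simp
  refine ⟨part1, fun htop => ?_⟩
  filter_upwards [part1] with ω hω
  rw [htop, ha, ENNReal.top_div_of_ne_top ENNReal.ofReal_ne_top,
    ENNReal.top_rpow_of_pos (by norm_num), ENNReal.mul_top (by simp), top_le_iff] at hω
  rw [tendsto_atTop]
  intro B
  have hlt : ENNReal.ofReal B < liminf (fun n : ℕ =>
      ENNReal.ofReal (Real.sqrt n * energy (envC T c ω) n)) atTop := by
    rw [hω]; exact ENNReal.ofReal_lt_top
  filter_upwards [eventually_lt_of_lt_liminf hlt] with n hn
  exact (ENNReal.ofReal_lt_ofReal_iff'.1 hn).1.le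
end
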